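/- arXiv:2604.14681 — 3 statements merged into one kernel-verified Lean document; each statement's English description precedes it below -/
import Mathlib

section
/- The star-exponential satisfies the exponent rule: for all configuration functionals Ψ, Φ ∈ A₀ one has exp∗ Ψ ∗ exp∗ Φ = exp∗ (Ψ + Φ), where the sum Ψ + Φ is taken componentwise. -/
open MeasureTheory Finset

abbrev CF (E : Type) : Type := (n : ℕ) → (Fin n → E) → ℝ

namespace CF

variable {E : Type}

/-- Symmetry of a configuration functional under permutations of the arguments. -/
def IsSymm (F : CF E) : Prop :=
  ∀ (n : ℕ) (σ : Equiv.Perm (Fin n)) (x : Fin n → E), F n (x ∘ σ) = F n x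

/-- The subtuple of `x` with indices in `I`, listed in increasing order. -/
noncomputable def sub {n : ℕ} (x : Fin n → E) (I : Finset (Fin n)) : Fin I.card → E :=
  fun i => x (I.orderIsoOfFin rfl i).1

/-- The convolution `Ψ ∗ Φ`. -/
noncomputable def conv (Ψ Φ : CF E) : CF E :=
  fun n x => ∑ I : Finset (Fin n), Ψ I.card (sub x I) * Φ Iᶜ.card (sub x Iᶜ)

/-- The unit `𝟙`. -/
def unit : CF E := fun n _ => if n = 0 then 1 else 0

/-- Star-powers `Φ^{∗m}`. -/
noncomputable def starPow (Φ : CF E) : ℕ → CF E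
  | 0 => unit
  | m + 1 => conv Φ (starPow Φ m)

/-- The star-exponential `exp∗ Φ = 𝟙 + Σ_{m≥1} Φ^{∗m}/m!`; on `A₀` the sum in the
`n`-th component is finite since `(Φ^{∗m})^{(n)} = 0` for `m > n`. -/
noncomputable def starExp (Φ : CF E) : CF E :=
  fun n x => ∑ m ∈ Finset.range (n + 1), ((m.factorial : ℝ))⁻¹ * starPow Φ m n x

/-- The derivative `D_x`. -/
noncomputable def D (x : E) (Φ : CF E) : CF E := fun n y => Φ (n + 1) (Fin.cons x y)

/-- The second derivative `D_{x₁,x₂} = D_{x₁} ∘ D_{x₂}`. -/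
noncomputable def D2 (x₁ x₂ : E) (Φ : CF E) : CF E := D x₁ (D x₂ Φ)

end CF

/-!
Fix a configuration `x : Fin n → E`. Restricting a functional to the subconfigurations of `x` and
placing the value at `T \ S` in the entry `(S, T)` gives an element of the incidence algebra of the
Boolean lattice of subsets of `Fin n`. This linear assignment turns `conv` into multiplication,
and it sends functionals vanishing on the empty configuration to nilpotent elements, because a
product of more than `n` of them would require splitting `n` points into more than `n` nonempty
parts. On such functionals `starExp` becomes the exponential of a nilpotent element. Exchanging
a subset with its complement shows that `conv` is commutative, so the exponent rule follows from
the one for commuting nilpotent elements.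
-/

namespace CF

section Restriction

variable {E : Type} {n : ℕ}

/-- The set function `S ↦ F(x_S)` obtained by evaluating a configuration functional on the
subconfigurations of `x`. -/
noncomputable def restrict (x : Fin n → E) (F : CF E) (S : Finset (Fin n)) : ℝ :=
  F S.card (sub x S)

theorem conv_apply (F G : CF E) (x : Fin n → E) :
    conv F G n x = ∑ I : Finset (Fin n), restrict x F I * restrict x G Iᶜ :=
  rfl

theorem conv_comm (F G : CF E) : conv F G = conv G F := by
  funext n x
  rw [conv_apply, conv_apply, ← compl_bijective.sum_comp]
  refine sum_congr rfl fun I _ => ?_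
  rw [compl_compl, mul_comm]

theorem restrict_image_of_strictMono (x : Fin n → E) (F : CF E) {k : ℕ} {e : Fin k → Fin n}
    (he : StrictMono e) : restrict x F (univ.image e) = F k (x ∘ e) := by
  obtain ⟨S, hS⟩ : ∃ S, S = univ.image e := ⟨_, rfl⟩
  have hcard : S.card = k := by
    rw [hS, card_image_of_injective _ he.injective, card_fin]
  rw [← hS]
  subst hcard
  have he_eq : e = S.orderEmbOfFin rfl :=
    orderEmbOfFin_unique rfl (fun i => hS ▸ mem_image_of_mem e (mem_univ i)) he
  rw [he_eq]
  rfl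

theorem restrict_univ (x : Fin n → E) (F : CF E) : restrict x F univ = F n x := by
  simpa only [image_id, Function.comp_id] using restrict_image_of_strictMono x F strictMono_id

theorem restrict_sub (x : Fin n → E) (F : CF E) (S : Finset (Fin n)) (J : Finset (Fin S.card)) :
    restrict (sub x S) F J = restrict x F (J.map (S.orderEmbOfFin rfl).toEmbedding) := by
  have hmono : StrictMono (S.orderEmbOfFin rfl ∘ J.orderEmbOfFin rfl) :=
    (S.orderEmbOfFin rfl).strictMono.comp (J.orderEmbOfFin rfl).strictMono
  have himage : univ.image (S.orderEmbOfFin rfl ∘ J.orderEmbOfFin rfl) =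
      J.map (S.orderEmbOfFin rfl).toEmbedding := by
    rw [← image_image, image_orderEmbOfFin_univ, map_eq_image]
    rfl
  rw [← himage, restrict_image_of_strictMono x F hmono]
  rfl

theorem restrict_conv (x : Fin n → E) (F G : CF E) (S : Finset (Fin n)) :
    restrict x (conv F G) S = ∑ T ∈ S.powerset, restrict x F T * restrict x G (S \ T) := by
  let e := (S.orderEmbOfFin rfl).toEmbedding
  have hS : univ.map e = S := map_orderEmbOfFin_univ S rfl
  have hpowerset : S.powerset = univ.image (map e) := by
    conv_lhs => rw [← hS]
    ext T
    simp [subset_map_iff, eq_comm]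
  calc restrict x (conv F G) S
      = ∑ J : Finset (Fin S.card), restrict (sub x S) F J * restrict (sub x S) G Jᶜ := rfl
    _ = ∑ J : Finset (Fin S.card), restrict x F (J.map e) * restrict x G (S \ J.map e) := by
      refine sum_congr rfl fun J _ => ?_
      rw [restrict_sub, restrict_sub, compl_eq_univ_sdiff, Finset.map_sdiff, hS]
    _ = ∑ T ∈ S.powerset, restrict x F T * restrict x G (S \ T) := by
      rw [hpowerset, sum_image (map_injective e).injOn]

end Restriction

section StarExp

variable {E : Type} {F : CF E}

theorem starPow_eq_zero_of_lt (hF : F 0 = 0) {m n : ℕ} (hnm : n < m) : starPow F m n = 0 := by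
  induction m generalizing n with
  | zero => exact absurd hnm n.not_lt_zero
  | succ m ih =>
    funext x
    rw [starPow, conv_apply, Pi.zero_apply]
    refine sum_eq_zero fun I _ => ?_
    rcases I.eq_empty_or_nonempty with rfl | hI
    · exact mul_eq_zero_of_left (congrFun hF _) _
    · have hcompl : Iᶜ.card < m := by
        have := card_add_card_compl I
        rw [Fintype.card_fin] at this
        have := hI.card_pos
        lia
      exact mul_eq_zero_of_right _ (congrFun (ih hcompl) _)

theorem starExp_eq_sum_range (hF : F 0 = 0) {k N : ℕ} (hkN : k < N) :
    starExp F k = (∑ m ∈ range N, (m.factorial : ℚ)⁻¹ • starPow F m) k := by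
  funext y
  simp only [starExp, Finset.sum_apply, Pi.smul_apply, Rat.smul_def, Rat.cast_inv,
    Rat.cast_natCast]
  refine sum_subset (range_subset_range.2 hkN) fun m _ hm => ?_
  have hkm : k < m := by simpa using hm
  rw [starPow_eq_zero_of_lt hF hkm, Pi.zero_apply, mul_zero]

end StarExp

section Incidence

variable {E : Type} {n : ℕ}

/-- The element of the incidence algebra of the subsets of `Fin n` whose entry at `S ⊆ T` is
`F(x_{T \ S})`. It encodes the values of `F` on the subconfigurations of `x` in an associative
algebra whose product is the convolution. -/
noncomputable def incidence (x : Fin n → E) :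
    CF E →ₗ[ℚ] IncidenceAlgebra ℝ (Finset (Fin n)) where
  toFun F :=
    ⟨fun S T => if S ≤ T then restrict x F (T \ S) else 0, fun _ _ hST => if_neg hST⟩
  map_add' F G := by
    ext S T hST
    simp [hST, restrict]
  map_smul' q F := by
    ext S T hST
    simp [hST, restrict, IncidenceAlgebra.constSMul_apply]

theorem incidence_apply (x : Fin n → E) (F : CF E) {S T : Finset (Fin n)} (hST : S ≤ T) :
    incidence x F S T = restrict x F (T \ S) :=
  if_pos hST

theorem incidence_empty_univ (x : Fin n → E) (F : CF E) : incidence x F ∅ univ = F n x := by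
  rw [incidence_apply x F (empty_subset univ), sdiff_empty, restrict_univ]

theorem ext_incidence {F G : CF E}
    (hFG : ∀ (n : ℕ) (x : Fin n → E), incidence x F = incidence x G) : F = G := by
  funext n x
  rw [← incidence_empty_univ x F, hFG, incidence_empty_univ]

theorem incidence_congr (x : Fin n → E) {F G : CF E} (hFG : ∀ k ≤ n, F k = G k) :
    incidence x F = incidence x G := by
  ext S T hST
  rw [incidence_apply x F hST, incidence_apply x G hST, restrict, restrict,
    hFG _ (card_finset_fin_le _)]

theorem incidence_unit (x : Fin n → E) : incidence x unit = 1 := by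
  ext S T hST
  have hdiff : T \ S = ∅ ↔ S = T := sdiff_eq_empty_iff_subset.trans hST.ge_iff_eq
  simp only [incidence_apply x unit hST, restrict, unit, card_eq_zero, hdiff,
    IncidenceAlgebra.one_apply]

theorem incidence_conv (x : Fin n → E) (F G : CF E) :
    incidence x (conv F G) = incidence x F * incidence x G := by
  ext S T hST
  have hcancel : ∀ U ∈ (T \ S).powerset, (S ∪ U) \ S = U := fun U hU =>
    union_sdiff_cancel_left (disjoint_of_subset_right (mem_powerset.1 hU) disjoint_sdiff)
  have hinj : Set.InjOn (S ∪ ·) ((T \ S).powerset : Set (Finset (Fin n))) :=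
    Set.LeftInvOn.injOn (f₁' := (· \ S)) hcancel
  rw [incidence_apply x _ hST, restrict_conv, IncidenceAlgebra.mul_apply,
    Icc_eq_image_powerset hST, sum_image hinj]
  refine sum_congr rfl fun U hU => ?_
  have hUT : U ⊆ T := (mem_powerset.1 hU).trans sdiff_subset
  rw [incidence_apply x F subset_union_left, incidence_apply x G (union_subset hST hUT),
    hcancel U hU, sdiff_sdiff_left]
  rfl

theorem incidence_commute (x : Fin n → E) (F G : CF E) :
    Commute (incidence x F) (incidence x G) := by
  rw [commute_iff_eq, ← incidence_conv, conv_comm, incidence_conv]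

theorem incidence_starPow (x : Fin n → E) (F : CF E) (m : ℕ) :
    incidence x (starPow F m) = incidence x F ^ m := by
  induction m with
  | zero => rw [starPow, incidence_unit, pow_zero]
  | succ m ih => rw [starPow, incidence_conv, ih, pow_succ']

theorem incidence_pow_eq_zero (x : Fin n → E) {F : CF E} (hF : F 0 = 0) :
    incidence x F ^ (n + 1) = 0 := by
  rw [← incidence_starPow, ← map_zero (incidence x)]
  exact incidence_congr x fun k hk => starPow_eq_zero_of_lt hF (Nat.lt_succ_of_le hk)

theorem incidence_starExp (x : Fin n → E) {F : CF E} (hF : F 0 = 0) :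
    incidence x (starExp F) = IsNilpotent.exp (incidence x F) := by
  calc incidence x (starExp F)
      = incidence x (∑ m ∈ range (n + 1), (m.factorial : ℚ)⁻¹ • starPow F m) :=
        incidence_congr x fun k hk => starExp_eq_sum_range hF (Nat.lt_succ_of_le hk)
    _ = ∑ m ∈ range (n + 1), (m.factorial : ℚ)⁻¹ • incidence x F ^ m := by
        simp only [map_sum, map_smul, incidence_starPow]
    _ = IsNilpotent.exp (incidence x F) :=
        (IsNilpotent.exp_eq_sum (incidence_pow_eq_zero x hF)).symm

end Incidence

end CF

open CF in
theorem starExp_conv_starExp_general {E : Type} {Ψ Φ : CF E} (hΨ0 : Ψ 0 = 0) (hΦ0 : Φ 0 = 0) :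
    conv (starExp Ψ) (starExp Φ) = starExp (Ψ + Φ) := by
  have hsum0 : (Ψ + Φ) 0 = 0 := by rw [Pi.add_apply, hΨ0, hΦ0, add_zero]
  refine ext_incidence fun n x => ?_
  calc incidence x (conv (starExp Ψ) (starExp Φ))
      = IsNilpotent.exp (incidence x Ψ) * IsNilpotent.exp (incidence x Φ) := by
        rw [incidence_conv, incidence_starExp x hΨ0, incidence_starExp x hΦ0]
    _ = IsNilpotent.exp (incidence x Ψ + incidence x Φ) :=
        (IsNilpotent.exp_add_of_commute (incidence_commute x Ψ Φ)
          ⟨n + 1, incidence_pow_eq_zero x hΨ0⟩ ⟨n + 1, incidence_pow_eq_zero x hΦ0⟩).symm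
    _ = incidence x (starExp (Ψ + Φ)) := by rw [← map_add, incidence_starExp x hsum0]

open CF in
/-- the exponent rule `exp∗ Ψ ∗ exp∗ Φ = exp∗ (Ψ + Φ)` on `A₀`. -/
theorem starExp_conv_starExp (E : Type) (Ψ Φ : CF E)
    (hΨ0 : Ψ 0 = 0) (hΨsymm : IsSymm Ψ) (hΦ0 : Φ 0 = 0) (hΦsymm : IsSymm Φ) :
    conv (starExp Ψ) (starExp Φ) = starExp (Ψ + Φ) :=
  starExp_conv_starExp_general hΨ0 hΦ0
end

section
/- (Exponential representation, Lemma 2.2.) Let d ≥ 1, let Λ ⊆ ℝ^d be a bounded measurable set, and let Φ = (Φ^{(n)})_{n≥0} ∈ A₀ be a configuration functional over E = ℝ^d with each Φ^{(n)} measurable. Suppose there are constants C > 0 and 0 < c < 1/2 such that for every n ≥ 0 and every x ∈ ℝ^d one has ∫_{Λ^n} |Φ^{(n+1)}(x,y₁,…,y_n)| dy₁…dy_n ≤ n! · C · c^n. Let Ψ = exp∗ Φ. Then the series Σ_{n≥1} (1/n!) ∫_{Λ^n} Φ^{(n)}(x₁,…,x_n) dx₁…dx_n and Σ_{n≥0}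 (1/n!) ∫_{Λ^n} Ψ^{(n)}(x₁,…,x_n) dx₁…dx_n both converge absolutely, and Σ_{n=0}^∞ (1/n!) ∫_{Λ^n} Ψ^{(n)}(x₁,…,x_n) dx₁…dx_n = exp( Σ_{n=1}^∞ (1/n!) ∫_{Λ^n} Φ^{(n)}(x₁,…,x_n) dx₁…dx_n ). -/
open MeasureTheory Finset

/-- Euclidean space `ℝ^d`. -/
abbrev Euc (d : ℕ) : Type := EuclideanSpace ℝ (Fin d)

/-- The product measure on `Λ^n ⊆ (ℝ^d)^n` (Lebesgue measure restricted to `Λ`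
in each coordinate). -/
noncomputable def piRestrict (d : ℕ) (Λ : Set (Euc d)) (n : ℕ) :
    MeasureTheory.Measure (Fin n → Euc d) :=
  MeasureTheory.Measure.pi fun _ => MeasureTheory.volume.restrict Λ

/-- Lebesgue measure on `(ℝ^d)^n`. -/
noncomputable def piVol (d : ℕ) (n : ℕ) : MeasureTheory.Measure (Fin n → Euc d) :=
  MeasureTheory.Measure.pi fun _ => MeasureTheory.volume

/-!
To a configuration functional `F` attach the exponential generating series
`∑ₙ (1/n!) (∫ F⁽ⁿ⁾ dμⁿ) Xⁿ`. For every `I ⊆ {1, …, n}` the map `x ↦ (x_I, x_{Iᶜ})` carries `μⁿ` to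
`μ^|I| ⊗ μ^(n-|I|)`, and there are `n! / (k! (n-k)!)` sets `I` with `|I| = k`; hence `∗` becomes the
product of power series and `exp∗` becomes the formal exponential. The coefficients of the series
of `Φ` are absolutely summable by comparison with a geometric series, and for such series
composition with `exp` commutes with summing the coefficients, by Fubini for double series.
-/

open scoped PowerSeries

theorem coeff_pow_eq_zero_of_lt {R : Type*} [Semiring R] {p : R⟦X⟧}
    (hp : p.constantCoeff = 0) {m n : ℕ} (hnm : n < m) :
    (p ^ m).coeff n = 0 :=
  PowerSeries.coeff_of_lt_order n <| (Nat.cast_lt.mpr hnm).trans_le <|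
    PowerSeries.le_order_pow_of_constantCoeff_eq_zero m hp

theorem coeff_subst_eq_sum_range {R : Type*} [CommRing R] {p : R⟦X⟧}
    (hp : p.constantCoeff = 0) (f : R⟦X⟧) (n : ℕ) :
    PowerSeries.coeff n (f.subst p) = ∑ m ∈ range (n + 1), f.coeff m * (p ^ m).coeff n := by
  rw [PowerSeries.coeff_subst' (.of_constantCoeff_zero' hp)]
  refine finsum_eq_sum_of_support_subset _ fun m hm => ?_
  contrapose! hm
  have hnm : n < m := by simpa using hm
  simp [coeff_pow_eq_zero_of_lt hp hnm]

theorem coeff_exp_real (m : ℕ) : (PowerSeries.exp ℝ).coeff m = (m.factorial : ℝ)⁻¹ := by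
  simp [PowerSeries.coeff_exp]

theorem summable_norm_coeff_exp_mul_pow (r : ℝ) :
    Summable fun m => ‖(PowerSeries.exp ℝ).coeff m‖ * r ^ m := by
  simpa [coeff_exp_real, div_eq_inv_mul] using Real.summable_pow_div_factorial r

/-- Absolute summability of the coefficients of a power series, i.e. absolute convergence at `1`. -/
def IsAbsSummable {R : Type*} [NormedRing R] (p : R⟦X⟧) : Prop :=
  Summable fun n => ‖p.coeff n‖

namespace IsAbsSummable

section NormedRing

variable {R : Type*} [NormedRing R] {p q : R⟦X⟧}

theorem one : IsAbsSummable (1 : R⟦X⟧) :=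
  summable_of_ne_finset_zero (s := {0}) fun n hn => by
    simp [PowerSeries.coeff_one, notMem_singleton.mp hn]

theorem mul (hp : IsAbsSummable p) (hq : IsAbsSummable q) : IsAbsSummable (p * q) := by
  simpa only [IsAbsSummable, PowerSeries.coeff_mul] using
    summable_norm_sum_mul_antidiagonal_of_summable_norm hp hq

theorem pow (hp : IsAbsSummable p) (m : ℕ) : IsAbsSummable (p ^ m) := by
  induction m with
  | zero => simpa only [pow_zero] using one
  | succ m ih => simpa only [pow_succ'] using hp.mul ih

theorem tsum_coeff_mul [CompleteSpace R] (hp : IsAbsSummable p) (hq : IsAbsSummable q) :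
    ∑' n, (p * q).coeff n = (∑' n, p.coeff n) * ∑' n, q.coeff n := by
  simp_rw [PowerSeries.coeff_mul]
  exact (tsum_mul_tsum_eq_tsum_sum_antidiagonal_of_summable_norm hp hq).symm

theorem tsum_coeff_pow [CompleteSpace R] (hp : IsAbsSummable p) (m : ℕ) :
    ∑' n, (p ^ m).coeff n = (∑' n, p.coeff n) ^ m := by
  induction m with
  | zero => simp [PowerSeries.coeff_one]
  | succ m ih => rw [pow_succ', hp.tsum_coeff_mul (hp.pow m), ih, pow_succ']

theorem tsum_norm_coeff_mul_le (hp : IsAbsSummable p) (hq : IsAbsSummable q) :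
    ∑' n, ‖(p * q).coeff n‖ ≤ (∑' n, ‖p.coeff n‖) * ∑' n, ‖q.coeff n‖ := by
  have hp' : Summable fun n => ‖‖p.coeff n‖‖ := hp.norm
  have hq' : Summable fun n => ‖‖q.coeff n‖‖ := hq.norm
  rw [tsum_mul_tsum_eq_tsum_sum_antidiagonal_of_summable_norm hp' hq']
  refine (hp.mul hq).tsum_le_tsum (fun n => ?_)
    (summable_norm_sum_mul_antidiagonal_of_summable_norm hp' hq').of_norm
  rw [PowerSeries.coeff_mul]
  exact norm_sum_le_of_le _ fun kl _ => norm_mul_le _ _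

theorem tsum_norm_coeff_pow_le [NormOneClass R] (hp : IsAbsSummable p) (m : ℕ) :
    ∑' n, ‖(p ^ m).coeff n‖ ≤ (∑' n, ‖p.coeff n‖) ^ m := by
  induction m with
  | zero => simp [PowerSeries.coeff_one, apply_ite norm]
  | succ m ih =>
    rw [pow_succ', pow_succ']
    exact (hp.tsum_norm_coeff_mul_le (hp.pow m)).trans <|
      mul_le_mul_of_nonneg_left ih (tsum_nonneg fun _ => norm_nonneg _)

theorem summable_norm_coeff_mul_coeff_pow [NormOneClass R] (hp : IsAbsSummable p) {f : R⟦X⟧}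
    (hf : Summable fun m => ‖f.coeff m‖ * (∑' n, ‖p.coeff n‖) ^ m) :
    Summable fun mn : ℕ × ℕ => ‖f.coeff mn.1 * (p ^ mn.1).coeff mn.2‖ := by
  have summable_row (m : ℕ) : Summable fun n => ‖f.coeff m‖ * ‖(p ^ m).coeff n‖ :=
    (hp.pow m).mul_left _
  refine Summable.of_nonneg_of_le (fun _ => norm_nonneg _) (fun _ => norm_mul_le _ _) ?_
  refine (summable_prod_of_nonneg fun _ => by positivity).mpr ⟨summable_row, ?_⟩
  refine hf.of_nonneg_of_le (fun m => tsum_nonneg fun _ => by positivity) fun m => ?_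
  calc ∑' n, ‖f.coeff m‖ * ‖(p ^ m).coeff n‖
      = ‖f.coeff m‖ * ∑' n, ‖(p ^ m).coeff n‖ := tsum_mul_left
    _ ≤ ‖f.coeff m‖ * (∑' n, ‖p.coeff n‖) ^ m :=
        mul_le_mul_of_nonneg_left (hp.tsum_norm_coeff_pow_le m) (norm_nonneg _)

end NormedRing

section Subst

variable {R : Type*} [NormedCommRing R] [NormOneClass R] {p f : R⟦X⟧}

theorem subst (hp : IsAbsSummable p) (hp0 : p.constantCoeff = 0)
    (hf : Summable fun m => ‖f.coeff m‖ * (∑' n, ‖p.coeff n‖) ^ m) :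
    IsAbsSummable (f.subst p) := by
  have hswap := (hp.summable_norm_coeff_mul_coeff_pow hf).prod_symm
  refine hswap.prod.of_nonneg_of_le (fun _ => norm_nonneg _) fun n => ?_
  rw [coeff_subst_eq_sum_range hp0]
  exact (norm_sum_le _ _).trans <|
    (hswap.prod_factor n).sum_le_tsum _ fun _ _ => norm_nonneg _

theorem tsum_coeff_subst [CompleteSpace R] (hp : IsAbsSummable p) (hp0 : p.constantCoeff = 0)
    (hf : Summable fun m => ‖f.coeff m‖ * (∑' n, ‖p.coeff n‖) ^ m) :
    ∑' n, PowerSeries.coeff n (f.subst p) = ∑' m, f.coeff m * (∑' n, p.coeff n) ^ m := by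
  have coeff_eq_tsum (n : ℕ) :
      PowerSeries.coeff n (f.subst p) = ∑' m, f.coeff m * (p ^ m).coeff n := by
    rw [coeff_subst_eq_sum_range hp0, tsum_eq_sum]
    intro m hm
    rw [coeff_pow_eq_zero_of_lt hp0 (by simpa using hm), mul_zero]
  have hdouble : Summable (Function.uncurry fun m n => f.coeff m * (p ^ m).coeff n) :=
    (hp.summable_norm_coeff_mul_coeff_pow hf).of_norm
  calc ∑' n, PowerSeries.coeff n (f.subst p)
      = ∑' n, ∑' m, f.coeff m * (p ^ m).coeff n := tsum_congr coeff_eq_tsum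
    _ = ∑' m, ∑' n, f.coeff m * (p ^ m).coeff n := hdouble.tsum_comm
    _ = ∑' m, f.coeff m * (∑' n, p.coeff n) ^ m := tsum_congr fun m => by
        rw [(hp.pow m).of_norm.tsum_mul_left, hp.tsum_coeff_pow]

end Subst

section Exp

variable {p : ℝ⟦X⟧}

theorem exp_subst (hp : IsAbsSummable p) (hp0 : p.constantCoeff = 0) :
    IsAbsSummable ((PowerSeries.exp ℝ).subst p) :=
  hp.subst hp0 (summable_norm_coeff_exp_mul_pow _)

theorem tsum_coeff_exp_subst (hp : IsAbsSummable p) (hp0 : p.constantCoeff = 0) :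
    ∑' n, PowerSeries.coeff n ((PowerSeries.exp ℝ).subst p) = Real.exp (∑' n, p.coeff n) := by
  rw [hp.tsum_coeff_subst hp0 (summable_norm_coeff_exp_mul_pow _), Real.exp_eq_exp_ℝ,
    NormedSpace.exp_eq_tsum_div]
  simp only [coeff_exp_real, div_eq_inv_mul]

end Exp

end IsAbsSummable

theorem sum_card_eq_factorial_mul_sum_antidiagonal {K : Type*} [Field K] [CharZero K]
    (n : ℕ) (a b : ℕ → K) :
    ∑ I : Finset (Fin n), a I.card * b Iᶜ.card =
      n.factorial * ∑ kl ∈ antidiagonal n,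
        ((kl.1.factorial : K)⁻¹ * a kl.1) * ((kl.2.factorial : K)⁻¹ * b kl.2) := by
  have hcard := sum_powerset_apply_card (fun k => a k * b (n - k)) (x := (univ : Finset (Fin n)))
  simp only [powerset_univ, card_fin] at hcard
  simp only [card_compl, Fintype.card_fin, hcard, Nat.sum_antidiagonal_eq_sum_range_succ_mk,
    mul_sum]
  refine sum_congr rfl fun k hk => ?_
  rw [nsmul_eq_mul, Nat.cast_choose K (mem_range_succ_iff.mp hk)]
  ring

section FinCons

variable {E : Type*} [MeasurableSpace E] {μ : Measure E} {n : ℕ}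

theorem lintegral_pi_fin_succ [SigmaFinite μ] {f : (Fin (n + 1) → E) → ENNReal}
    (hf : AEMeasurable f (Measure.pi fun _ => μ)) :
    ∫⁻ y, f y ∂(Measure.pi fun _ => μ) =
      ∫⁻ x, ∫⁻ y, f (Fin.cons x y) ∂(Measure.pi fun _ => μ) ∂μ := by
  have hcons : MeasurePreserving (fun z : E × (Fin n → E) => (Fin.cons z.1 z.2 : Fin (n + 1) → E))
      (μ.prod (Measure.pi fun _ => μ)) (Measure.pi fun _ => μ) := by
    simpa [Fin.insertNthEquiv, Function.comp_def] using
      (measurePreserving_piFinSuccAbove (fun _ : Fin (n + 1) => μ) 0).symm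
  rw [← hcons.map_eq] at hf ⊢
  rw [lintegral_map' hf hcons.aemeasurable]
  exact lintegral_prod _ (hf.comp_aemeasurable hcons.aemeasurable)

theorem lintegral_pi_fin_succ_le [SigmaFinite μ] {f : (Fin (n + 1) → E) → ENNReal}
    (hf : AEMeasurable f (Measure.pi fun _ => μ)) {B : ENNReal}
    (hB : ∀ᵐ x ∂μ, ∫⁻ y, f (Fin.cons x y) ∂(Measure.pi fun _ => μ) ≤ B) :
    ∫⁻ y, f y ∂(Measure.pi fun _ => μ) ≤ B * μ Set.univ := by
  rw [lintegral_pi_fin_succ hf, ← lintegral_const]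
  exact lintegral_mono_ae hB

theorem integrable_of_lintegral_cons_le [IsFiniteMeasure μ] {V : Type*} [NormedAddCommGroup V]
    {f : (Fin (n + 1) → E) → V}
    (hf : AEStronglyMeasurable f (Measure.pi fun _ => μ)) {B : ENNReal} (hBtop : B ≠ ⊤)
    (hB : ∀ᵐ x ∂μ, ∫⁻ y, ‖f (Fin.cons x y)‖ₑ ∂(Measure.pi fun _ => μ) ≤ B) :
    Integrable f (Measure.pi fun _ => μ) :=
  ⟨hf, (lintegral_pi_fin_succ_le hf.enorm hB).trans_lt <|
    ENNReal.mul_lt_top hBtop.lt_top (measure_lt_top _ _)⟩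

theorem norm_integral_le_of_lintegral_cons_le [IsFiniteMeasure μ]
    {V : Type*} [NormedAddCommGroup V] [NormedSpace ℝ V] {f : (Fin (n + 1) → E) → V}
    (hf : AEStronglyMeasurable f (Measure.pi fun _ => μ)) {B : ENNReal} (hBtop : B ≠ ⊤)
    (hB : ∀ᵐ x ∂μ, ∫⁻ y, ‖f (Fin.cons x y)‖ₑ ∂(Measure.pi fun _ => μ) ≤ B) :
    ‖∫ y, f y ∂(Measure.pi fun _ => μ)‖ ≤ B.toReal * μ.real Set.univ := by
  have hle := (enorm_integral_le_lintegral_enorm f).trans (lintegral_pi_fin_succ_le hf.enorm hB)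
  have htop : B * μ Set.univ ≠ ⊤ := ENNReal.mul_ne_top hBtop (measure_ne_top _ _)
  simpa [Measure.real] using ENNReal.toReal_mono htop hle

end FinCons

namespace CF

variable {E : Type} [MeasurableSpace E]

/-- The exponential generating series of the integrals of `F` against the powers of `μ`. Its
coefficients are the terms of the series in the exponential representation. -/
noncomputable def genSeries (μ : Measure E) (F : CF E) : ℝ⟦X⟧ :=
  PowerSeries.mk fun n => (n.factorial : ℝ)⁻¹ * ∫ x, F n x ∂(Measure.pi fun _ => μ)

theorem coeff_genSeries (μ : Measure E) (F : CF E) (n : ℕ) :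
    (genSeries μ F).coeff n = (n.factorial : ℝ)⁻¹ * ∫ x, F n x ∂(Measure.pi fun _ => μ) :=
  PowerSeries.coeff_mk _ _

theorem constantCoeff_genSeries (μ : Measure E) {F : CF E} (hF0 : F 0 = 0) :
    (genSeries μ F).constantCoeff = 0 := by
  simp [← PowerSeries.coeff_zero_eq_constantCoeff_apply, coeff_genSeries, hF0]

theorem isAbsSummable_genSeries_iff (μ : Measure E) (F : CF E) :
    IsAbsSummable (genSeries μ F) ↔
      Summable fun n : ℕ => (n.factorial : ℝ)⁻¹ * |∫ x, F n x ∂(Measure.pi fun _ => μ)| := by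
  simp only [IsAbsSummable, coeff_genSeries, norm_mul, norm_inv, RCLike.norm_natCast,
    Real.norm_eq_abs]

theorem integrable_unit (μ : Measure E) (n : ℕ) :
    Integrable (unit (E := E) n) (Measure.pi fun _ => μ) := by
  cases n with
  | zero => rw [Measure.pi_of_empty]; exact integrable_const _
  | succ n => exact integrable_zero _ _ _

theorem genSeries_unit (μ : Measure E) : genSeries μ unit = 1 := by
  ext n
  cases n with
  | zero => rw [coeff_genSeries, Measure.pi_of_empty]; simp [unit]
  | succ n => simp [coeff_genSeries, unit, PowerSeries.coeff_one]

theorem measurePreserving_sub_prodMk_sub_compl (μ : Measure E) [SigmaFinite μ]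
    {n : ℕ} (I : Finset (Fin n)) :
    MeasurePreserving (fun x : Fin n → E => (sub x I, sub x Iᶜ)) (Measure.pi fun _ => μ)
      ((Measure.pi fun _ => μ).prod (Measure.pi fun _ => μ)) :=
  (measurePreserving_sumPiEquivProdPi fun _ : Fin I.card ⊕ Fin Iᶜ.card => μ).comp
    (measurePreserving_piCongrLeft (fun _ => μ) (finSumEquivOfFinset (s := I) rfl rfl)).symm

section SigmaFinite

variable {μ : Measure E} [SigmaFinite μ] {F G Φ : CF E} {n : ℕ}

theorem integrable_sub_mul_sub_compl {I : Finset (Fin n)}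
    (hF : Integrable (F I.card) (Measure.pi fun _ => μ))
    (hG : Integrable (G Iᶜ.card) (Measure.pi fun _ => μ)) :
    Integrable (fun x : Fin n → E => F I.card (sub x I) * G Iᶜ.card (sub x Iᶜ))
      (Measure.pi fun _ => μ) :=
  (measurePreserving_sub_prodMk_sub_compl μ I).integrable_comp_of_integrable (hF.mul_prod hG)

theorem integral_sub_mul_sub_compl {I : Finset (Fin n)}
    (hF : AEStronglyMeasurable (F I.card) (Measure.pi fun _ => μ))
    (hG : AEStronglyMeasurable (G Iᶜ.card) (Measure.pi fun _ => μ)) :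
    ∫ x : Fin n → E, F I.card (sub x I) * G Iᶜ.card (sub x Iᶜ) ∂(Measure.pi fun _ => μ) =
      (∫ x, F I.card x ∂(Measure.pi fun _ => μ)) *
        ∫ x, G Iᶜ.card x ∂(Measure.pi fun _ => μ) := by
  have hsplit := measurePreserving_sub_prodMk_sub_compl μ I
  have hprod := hF.comp_fst.mul (hG.comp_snd (μ := Measure.pi fun _ : Fin I.card => μ))
  rw [← integral_prod_mul, ← hsplit.map_eq,
    integral_map hsplit.aemeasurable (by rwa [hsplit.map_eq])]

theorem integrable_conv (hF : ∀ n, Integrable (F n) (Measure.pi fun _ => μ))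
    (hG : ∀ n, Integrable (G n) (Measure.pi fun _ => μ)) (n : ℕ) :
    Integrable (conv F G n) (Measure.pi fun _ => μ) :=
  integrable_finsetSum _ fun _ _ => integrable_sub_mul_sub_compl (hF _) (hG _)

theorem genSeries_conv (hF : ∀ n, Integrable (F n) (Measure.pi fun _ => μ))
    (hG : ∀ n, Integrable (G n) (Measure.pi fun _ => μ)) :
    genSeries μ (conv F G) = genSeries μ F * genSeries μ G := by
  ext n
  have hn : (n.factorial : ℝ) ≠ 0 := by positivity
  simp only [PowerSeries.coeff_mul, coeff_genSeries, conv]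
  rw [integral_finsetSum _ fun _ _ => integrable_sub_mul_sub_compl (hF _) (hG _)]
  simp only [integral_sub_mul_sub_compl (hF _).1 (hG _).1]
  rw [sum_card_eq_factorial_mul_sum_antidiagonal n
    (fun k => ∫ x, F k x ∂(Measure.pi fun _ => μ)) (fun k => ∫ x, G k x ∂(Measure.pi fun _ => μ)),
    inv_mul_cancel_left₀ hn]

theorem integrable_starPow (hΦ : ∀ n, Integrable (Φ n) (Measure.pi fun _ => μ)) (m n : ℕ) :
    Integrable (starPow Φ m n) (Measure.pi fun _ => μ) := by
  induction m generalizing n with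
  | zero => exact integrable_unit μ n
  | succ m ih => exact integrable_conv hΦ ih n

theorem genSeries_starPow (hΦ : ∀ n, Integrable (Φ n) (Measure.pi fun _ => μ)) (m : ℕ) :
    genSeries μ (starPow Φ m) = genSeries μ Φ ^ m := by
  induction m with
  | zero => exact genSeries_unit μ
  | succ m ih => rw [starPow, genSeries_conv hΦ (integrable_starPow hΦ m), ih, pow_succ']

theorem genSeries_starExp (hΦ0 : Φ 0 = 0)
    (hΦ : ∀ n, Integrable (Φ n) (Measure.pi fun _ => μ)) :
    genSeries μ (starExp Φ) = (PowerSeries.exp ℝ).subst (genSeries μ Φ) := by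
  ext n
  rw [coeff_subst_eq_sum_range (constantCoeff_genSeries μ hΦ0), coeff_genSeries]
  simp only [starExp]
  rw [integral_finsetSum _ fun m _ => (integrable_starPow hΦ m n).const_mul _, mul_sum]
  refine sum_congr rfl fun m _ => ?_
  rw [integral_const_mul, coeff_exp_real, ← genSeries_starPow hΦ, coeff_genSeries]
  ring

end SigmaFinite

theorem isAbsSummable_genSeries_of_lintegral_cons_le {μ : Measure E} [IsFiniteMeasure μ]
    {Φ : CF E} (hΦmeas : ∀ n, AEStronglyMeasurable (Φ n) (Measure.pi fun _ => μ))
    {C c : ℝ} (hC : 0 ≤ C) (hc0 : 0 ≤ c) (hc : c < 1)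
    (hbound : ∀ n : ℕ, ∀ᵐ x ∂μ, ∫⁻ y, ‖Φ (n + 1) (Fin.cons x y)‖ₑ ∂(Measure.pi fun _ => μ) ≤
      ENNReal.ofReal (n.factorial * C * c ^ n)) :
    IsAbsSummable (genSeries μ Φ) := by
  rw [isAbsSummable_genSeries_iff, ← summable_nat_add_iff 1]
  refine ((summable_geometric_of_lt_one hc0 hc).mul_left (C * μ.real Set.univ)).of_nonneg_of_le
    (fun n => by positivity) fun n => ?_
  have hfact : (n.factorial : ℝ) ≤ (n + 1).factorial := by
    exact_mod_cast Nat.factorial_le n.le_succ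
  rw [inv_mul_le_iff₀ (by positivity)]
  calc |∫ y, Φ (n + 1) y ∂(Measure.pi fun _ => μ)|
      ≤ (ENNReal.ofReal (n.factorial * C * c ^ n)).toReal * μ.real Set.univ :=
        norm_integral_le_of_lintegral_cons_le (hΦmeas _) ENNReal.ofReal_ne_top (hbound n)
    _ = n.factorial * (C * μ.real Set.univ * c ^ n) := by
        rw [ENNReal.toReal_ofReal (by positivity)]; ring
    _ ≤ (n + 1).factorial * (C * μ.real Set.univ * c ^ n) := by gcongr

end CF

open CF in
theorem exponential_representation_general {E : Type} [MeasurableSpace E]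
    (μ : Measure E) [IsFiniteMeasure μ] {Φ : CF E} (hΦ0 : Φ 0 = 0)
    (hΦmeas : ∀ n, AEStronglyMeasurable (Φ n) (Measure.pi fun _ => μ))
    {C c : ℝ} (hC : 0 ≤ C) (hc0 : 0 ≤ c) (hc : c < 1)
    (hbound : ∀ n : ℕ, ∀ᵐ x ∂μ,
      ∫⁻ y, ENNReal.ofReal |Φ (n + 1) (Fin.cons x y)| ∂(Measure.pi fun _ => μ) ≤
        ENNReal.ofReal (n.factorial * C * c ^ n)) :
    Summable (fun n : ℕ =>
      (n.factorial : ℝ)⁻¹ * |∫ y, Φ n y ∂(Measure.pi fun _ => μ)|) ∧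
    Summable (fun n : ℕ =>
      (n.factorial : ℝ)⁻¹ * |∫ y, starExp Φ n y ∂(Measure.pi fun _ => μ)|) ∧
    ∑' n : ℕ, (n.factorial : ℝ)⁻¹ * ∫ y, starExp Φ n y ∂(Measure.pi fun _ => μ) =
      Real.exp (∑' n : ℕ, (n.factorial : ℝ)⁻¹ * ∫ y, Φ n y ∂(Measure.pi fun _ => μ)) := by
  simp only [← Real.enorm_eq_ofReal_abs] at hbound
  have hsummable : IsAbsSummable (genSeries μ Φ) :=
    isAbsSummable_genSeries_of_lintegral_cons_le hΦmeas hC hc0 hc hbound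
  have hintegrable (n : ℕ) : Integrable (Φ n) (Measure.pi fun _ => μ) := by
    cases n with
    | zero => rw [hΦ0]; exact integrable_zero _ _ _
    | succ n => exact integrable_of_lintegral_cons_le (hΦmeas _) ENNReal.ofReal_ne_top (hbound n)
  have hzero := constantCoeff_genSeries μ hΦ0
  have hexp : genSeries μ (starExp Φ) = (PowerSeries.exp ℝ).subst (genSeries μ Φ) :=
    genSeries_starExp hΦ0 hintegrable
  simp only [← isAbsSummable_genSeries_iff, ← coeff_genSeries, hexp]
  exact ⟨hsummable, hsummable.exp_subst hzero, hsummable.tsum_coeff_exp_subst hzero⟩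

open CF MeasureTheory in
/-- Lemma 2.2, exponential representation. -/
theorem exponential_representation (d : ℕ) (hd : 1 ≤ d)
    (Λ : Set (Euc d)) (hΛbdd : Bornology.IsBounded Λ) (hΛmeas : MeasurableSet Λ)
    (Φ : CF (Euc d)) (hΦ0 : Φ 0 = 0) (hΦsymm : IsSymm Φ)
    (hΦmeas : ∀ n, Measurable (Φ n))
    (C c : ℝ) (hC : 0 < C) (hc0 : 0 < c) (hc : c < 1 / 2)
    (hbound : ∀ (n : ℕ) (x : Euc d),
      ∫⁻ y, ENNReal.ofReal |Φ (n + 1) (Fin.cons x y)| ∂(piRestrict d Λ n) ≤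
        ENNReal.ofReal (n.factorial * C * c ^ n)) :
    Summable (fun n : ℕ =>
      ((n.factorial : ℝ))⁻¹ * |∫ y, Φ n y ∂(piRestrict d Λ n)|) ∧
    Summable (fun n : ℕ =>
      ((n.factorial : ℝ))⁻¹ * |∫ y, starExp Φ n y ∂(piRestrict d Λ n)|) ∧
    ∑' n : ℕ, ((n.factorial : ℝ))⁻¹ * ∫ y, starExp Φ n y ∂(piRestrict d Λ n) =
      Real.exp (∑' n : ℕ, ((n.factorial : ℝ))⁻¹ * ∫ y, Φ n y ∂(piRestrict d Λ n)) := by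
  have : Fact (volume Λ < ⊤) := ⟨hΛbdd.measure_lt_top⟩
  exact exponential_representation_general (volume.restrict Λ) hΦ0
    (fun n => (hΦmeas n).aestronglyMeasurable) hC.le hc0.le (by linarith)
    fun n => .of_forall (hbound n)
end

section
/- (Remark 3.2, recursion for the two-point kernels, equation (3.9).) Let ρ = (ρ^{(n)})_{n≥0} be a configuration functional over a type E with ρ^{(0)} = 1, let ρ_T ∈ A₀ satisfy ρ = exp∗ ρ_T, let x₁, x₂ ∈ E with ρ^{(1)}(x₁) ≠ 0, ρ^{(1)}(x₂) ≠ 0, ρ^{(2)}(x₁,x₂) ≠ 0, and let ω = ω_{(x₁,x₂)} ∈ A₀ be the unique functional satisfying D_{x₁,x₂} ρ_T / ρ^{(2)}(x₁,x₂) = ( exp∗ ω − (ρ^{(1)}(x₁)ρ^{(1)}(x₂)/ρ^{(2)}(x₁,x₂)) · 𝟙 ) ∗ ( D_{x₁} ρ_T / ρ^{(1)}(x₁) ) ∗ ( D_{x₂} ρ_T / ρ^{(1)}(x₂) ). Then for every k ≥ 1 and all y₁,…,y_k ∈ E: ω^{(k)}(y₁,…,y_k) = ρ_T^{(2+k)}(x₁,x₂,y₁,…,y_k)/ρ^{(2)}(x₁,x₂)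 − (ρ_T^{(2)}(x₁,x₂)/ρ^{(2)}(x₁,x₂)) · Σ_{(σ₁,σ₂)} [ρ_T^{(1+|σ₁|)}(x₁,y_{σ₁})/ρ^{(1)}(x₁)] · [ρ_T^{(1+|σ₂|)}(x₂,y_{σ₂})/ρ^{(1)}(x₂)] − Σ_{(σ₁,σ₂,σ₃), 0 < |σ₃| < k} [ρ_T^{(1+|σ₁|)}(x₁,y_{σ₁})/ρ^{(1)}(x₁)] · [ρ_T^{(1+|σ₂|)}(x₂,y_{σ₂})/ρ^{(1)}(x₂)] · Σ_{l=1}^{|σ₃|} (1/l!) Σ_{π ∈ Π_l(σ₃)} ∏_{i=1}^{l} ω^{(|π_i|)}(y_{π_i}) − Σ_{l=2}^{k} (1/l!) Σ_{π ∈ Π_l({1,…,k})} ∏_{i=1}^{l} ω^{(|π_i|)}(y_{π_i}); here (σ₁,σ₂) ranges over ordered pairs of disjoint, possibly empty subsets of {1,…,k} with σ₁ ∪ σ₂ = {1,…,k}, (σ₁,σ₂,σ₃) ranges over ordered triples of pairwise disjoint, possibly empty subsets with union {1,…,k} and 0 < |σ₃| < k, Π_l(S) denotes the set of partitions of a finite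 set S into l nonempty blocks, y_σ denotes the subtuple with indices in σ, and ρ_T^{(1+0)}(x_i, y_∅)/ρ^{(1)}(x_i) is interpreted as 1 for an empty part. -/
open MeasureTheory Finset

namespace CF

/-- Ordered partitions of the subset `S ⊆ {1,…,n}` into `l` nonempty, pairwise
disjoint parts whose union is `S`. -/
def ordPartsOf (l : ℕ) {n : ℕ} (S : Finset (Fin n)) : Finset (Fin l → Finset (Fin n)) :=
  Finset.univ.filter fun π =>
    (∀ i, (π i).Nonempty) ∧ (∀ i j, i ≠ j → Disjoint (π i) (π j)) ∧
      (∀ a, a ∈ S ↔ ∃ i, a ∈ π i)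

/-- Set partitions of `{1,…,n}` into nonempty blocks, encoded as the finset of blocks. -/
def setPartitions (n : ℕ) : Finset (Finset (Finset (Fin n))) :=
  Finset.univ.filter fun P =>
    (∀ B ∈ P, B.Nonempty) ∧ (∀ B ∈ P, ∀ B' ∈ P, B ≠ B' → Disjoint B B') ∧
      (∀ a : Fin n, ∃ B ∈ P, a ∈ B)

end CF

/-!
Fix `y : Fin k → E`. Reading a functional `F` as the set function `S ↦ F(y_S)` turns `∗` into the
convolution over ordered decompositions of a finite set, which is associative, and turns the
`m`-th star-power into a sum over ordered partitions into `m` nonempty blocks.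

With `c = ρ⁽¹⁾(x₁) ρ⁽¹⁾(x₂) / ρ⁽²⁾(x₁, x₂)`, `A = exp∗ ω - c 𝟙` and `Bᵢ = D_{xᵢ} ρ_T / ρ⁽¹⁾(xᵢ)`,
the `k`-th component of the defining equation is the sum of `A(y_K) (B₁ ∗ B₂)(y_{Kᶜ})` over
`K ⊆ {1, …, k}`. Since `Bᵢ⁽⁰⁾ = 1`, the term `K = {1, …, k}` is `A⁽ᵏ⁾(y)`, whose one-block part is
`ω⁽ᵏ⁾(y)`; the term `K = ∅` carries the coefficient `A⁽⁰⁾`, which the `0`-th component of the same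
equation identifies as `ρ_T⁽²⁾(x₁, x₂) / ρ⁽²⁾(x₁, x₂)`. Solving for `ω⁽ᵏ⁾(y)` gives the recursion.
-/

namespace CF

lemma sum_eq_empty_add_univ_add_sum_proper {α M : Type*} [Fintype α] [Nonempty α]
    [AddCommMonoid M] (f : Finset α → M) :
    ∑ K, f K = f ∅ + f univ + ∑ K with 0 < #K ∧ #K < Fintype.card α, f K := by
  classical
  have hextreme : ({K | ¬(0 < #K ∧ #K < Fintype.card α)} : Finset (Finset α)) = {∅, univ} := by
    ext K
    have hle := card_le_univ K
    simp only [mem_filter, mem_univ, true_and, mem_insert, mem_singleton, ← card_eq_zero,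
      ← card_eq_iff_eq_univ]
    omega
  rw [← sum_filter_not_add_sum_filter _ (fun K => 0 < #K ∧ #K < Fintype.card α), hextreme,
    sum_pair univ_nonempty.ne_empty.symm]

section Splits

variable {α β M : Type*} [DecidableEq α] [DecidableEq β] [AddCommMonoid M]

/-- The ordered decompositions of `S` into two disjoint, possibly empty parts: the index set of
the convolution. -/
def splits (S : Finset α) : Finset (Finset α × Finset α) :=
  S.powerset.image fun I => (I, S \ I)

lemma mem_splits {S : Finset α} {p : Finset α × Finset α} :
    p ∈ splits S ↔ Disjoint p.1 p.2 ∧ p.1 ∪ p.2 = S := by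
  simp only [splits, mem_image, mem_powerset]
  constructor
  · rintro ⟨I, hI, rfl⟩
    exact ⟨disjoint_sdiff, union_sdiff_of_subset hI⟩
  · rintro ⟨hdisj, rfl⟩
    exact ⟨p.1, subset_union_left, by rw [union_sdiff_cancel_left hdisj]⟩

lemma sum_splits (S : Finset α) (f : Finset α × Finset α → M) :
    ∑ p ∈ splits S, f p = ∑ I ∈ S.powerset, f (I, S \ I) :=
  sum_image fun _ _ _ _ h => congrArg Prod.fst h

lemma splits_empty : splits (∅ : Finset α) = {(∅, ∅)} := rfl

lemma sum_splits_map (e : α ↪ β) (S : Finset α) (f : Finset β × Finset β → M) :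
    ∑ p ∈ splits (S.map e), f p = ∑ p ∈ splits S, f (p.1.map e, p.2.map e) := by
  simp only [sum_splits, map_eq_image, powerset_image]
  rw [sum_image (image_injective e.injective).injOn]
  simp only [image_sdiff _ _ e.injective]

lemma sum_splits_assoc (S : Finset α) (f : Finset α → Finset α → Finset α → M) :
    ∑ p ∈ splits S, ∑ q ∈ splits p.1, f q.1 q.2 p.2 =
      ∑ p ∈ splits S, ∑ q ∈ splits p.2, f p.1 q.1 q.2 := by
  simp only [sum_sigma']
  refine sum_nbij' (fun z => ⟨(z.2.1, z.2.2 ∪ z.1.2), (z.2.2, z.1.2)⟩)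
    (fun z => ⟨(z.1.1 ∪ z.2.1, z.2.2), (z.1.1, z.2.1)⟩) ?_ ?_ ?_ ?_ (fun _ _ => rfl)
  all_goals
    rintro ⟨⟨I, J⟩, K, L⟩ h
    simp only [mem_sigma, mem_splits] at h ⊢
    obtain ⟨⟨hIJ, rfl⟩, hKL, rfl⟩ := h
  · simp_all [disjoint_union_left, disjoint_union_right, union_assoc]
  · simp_all [disjoint_union_left, disjoint_union_right, union_assoc]
  · rfl
  · rfl

lemma splits_univ [Fintype α] :
    splits univ = ({p | Disjoint p.1 p.2 ∧ p.1 ∪ p.2 = univ} : Finset (Finset α × Finset α)) := by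
  ext p
  simp only [mem_splits, mem_filter, mem_univ, true_and]

lemma mem_splits_compl [Fintype α] {K : Finset α} {p : Finset α × Finset α} :
    p ∈ splits Kᶜ ↔
      Disjoint p.1 p.2 ∧ Disjoint p.1 K ∧ Disjoint p.2 K ∧ p.1 ∪ p.2 ∪ K = univ := by
  rw [mem_splits, eq_compl_iff_isCompl, isCompl_iff, disjoint_union_left, codisjoint_iff,
    sup_eq_union, top_eq_univ, and_assoc]

/-- The ordered decompositions of `Fin k` into three disjoint parts, of which only the last is
required to be nonempty and proper: the index set of the mixed terms of the recursion. The last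
part carries the kernel, the first two the one-point factors. -/
def properTriples (k : ℕ) : Finset (Finset (Fin k) × Finset (Fin k) × Finset (Fin k)) :=
  {σ | Disjoint σ.1 σ.2.1 ∧ Disjoint σ.1 σ.2.2 ∧ Disjoint σ.2.1 σ.2.2 ∧
    σ.1 ∪ σ.2.1 ∪ σ.2.2 = univ ∧ 0 < #σ.2.2 ∧ #σ.2.2 < k}

lemma nonempty_of_mem_properTriples {k : ℕ} {σ : Finset (Fin k) × Finset (Fin k) × Finset (Fin k)}
    (hσ : σ ∈ properTriples k) : σ.2.2.Nonempty :=
  card_pos.1 (mem_filter.1 hσ).2.2.2.2.2.1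

lemma sum_properTriples {k : ℕ} (f : Finset (Fin k) × Finset (Fin k) × Finset (Fin k) → M) :
    ∑ σ ∈ properTriples k, f σ =
      ∑ K with 0 < #K ∧ #K < k, ∑ p ∈ splits Kᶜ, f (p.1, p.2, K) := by
  rw [sum_sigma']
  refine sum_nbij' (fun σ => ⟨σ.2.2, (σ.1, σ.2.1)⟩) (fun z => (z.2.1, z.2.2, z.1)) ?_ ?_
    (fun _ _ => rfl) (fun _ _ => rfl) (fun _ _ => rfl)
  all_goals
    intro _ h
    simp only [properTriples, mem_filter, mem_univ, true_and, mem_sigma, mem_splits_compl] at h ⊢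
    tauto

end Splits

section OrderedPartitions

variable {R : Type*} [CommSemiring R] {k : ℕ}

lemma sum_ordPartsOf_zero (S : Finset (Fin k)) (f : Finset (Fin k) → R) :
    ∑ π ∈ ordPartsOf 0 S, ∏ i, f (π i) = if S = ∅ then 1 else 0 := by
  split_ifs with hS
  · simp [ordPartsOf, hS]
  · simp [ordPartsOf, ← eq_empty_iff_forall_notMem, hS]

lemma cons_mem_ordPartsOf {l : ℕ} {S I : Finset (Fin k)} {π : Fin l → Finset (Fin k)} :
    (Fin.cons I π : Fin (l + 1) → Finset (Fin k)) ∈ ordPartsOf (l + 1) S ↔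
      I.Nonempty ∧ I ⊆ S ∧ π ∈ ordPartsOf l (S \ I) := by
  simp only [ordPartsOf, mem_filter, mem_univ, true_and, Fin.forall_fin_succ, Fin.exists_fin_succ,
    Fin.cons_zero, Fin.cons_succ, mem_sdiff, Finset.disjoint_left]
  grind

lemma sum_ordPartsOf_succ {f : Finset (Fin k) → R} (hf : f ∅ = 0) (l : ℕ) (S : Finset (Fin k)) :
    ∑ π ∈ ordPartsOf (l + 1) S, ∏ i, f (π i) =
      ∑ p ∈ splits S, f p.1 * ∑ π ∈ ordPartsOf l p.2, ∏ i, f (π i) := by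
  have hnonempty : ∑ I ∈ S.powerset with I.Nonempty,
        f I * ∑ π ∈ ordPartsOf l (S \ I), ∏ i, f (π i) =
      ∑ I ∈ S.powerset, f I * ∑ π ∈ ordPartsOf l (S \ I), ∏ i, f (π i) := by
    refine sum_filter_of_ne fun I _ hI => nonempty_iff_ne_empty.2 ?_
    rintro rfl
    simp [hf] at hI
  rw [sum_splits, ← hnonempty]
  simp only [mul_sum]
  rw [sum_sigma']
  refine sum_nbij' (fun π => ⟨π 0, Fin.tail π⟩) (fun z => Fin.cons z.1 z.2) ?_ ?_
    (fun π _ => Fin.cons_self_tail π) (fun _ _ => rfl) (fun π _ => Fin.prod_univ_succ _)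
  · intro π hπ
    rw [← Fin.cons_self_tail π, cons_mem_ordPartsOf] at hπ
    simp_all
  · rintro ⟨I, π⟩ h
    simp_all [cons_mem_ordPartsOf]

lemma sum_ordPartsOf_one {f : Finset (Fin k) → R} (hf : f ∅ = 0) (S : Finset (Fin k)) :
    ∑ π ∈ ordPartsOf 1 S, ∏ i, f (π i) = f S := by
  simp only [sum_ordPartsOf_succ hf, sum_ordPartsOf_zero, sum_splits]
  rw [sum_eq_single_of_mem S (mem_powerset_self S)]
  · simp
  · intro I hI hne
    rw [if_neg fun h => hne ((mem_powerset.1 hI).antisymm (sdiff_eq_empty_iff_subset.1 h)),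
      mul_zero]

end OrderedPartitions

section EvalOn

variable {E : Type} {k : ℕ}

/-- The set function `S ↦ F(y_S)` induced by `F` on the subsets of the index set of a fixed
tuple `y`. -/
noncomputable def evalOn (F : CF E) (y : Fin k → E) (S : Finset (Fin k)) : ℝ :=
  F #S (sub y S)

lemma evalOn_eq_of_card_eq (F : CF E) (y : Fin k → E) {S : Finset (Fin k)} {n : ℕ} (h : #S = n) :
    evalOn F y S = F n (y ∘ S.orderEmbOfFin h) := by
  subst h
  rfl

lemma evalOn_map (F : CF E) {m : ℕ} (y : Fin k → E) (e : Fin m ↪o Fin k) (I : Finset (Fin m)) :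
    evalOn F y (I.map e.toEmbedding) = evalOn F (y ∘ e) I := by
  have hcomp : (I.orderEmbOfFin rfl).trans e =
      (I.map e.toEmbedding).orderEmbOfFin (card_map _) :=
    orderEmbOfFin_unique' _ fun i => by simp
  rw [evalOn_eq_of_card_eq F y (card_map _), ← hcomp]
  rfl

lemma evalOn_univ (F : CF E) (y : Fin k → E) : evalOn F y univ = F k y := by
  have hid : RelEmbedding.refl _ = (univ : Finset (Fin k)).orderEmbOfFin (card_fin k) :=
    orderEmbOfFin_unique' _ fun i => mem_univ _
  rw [evalOn_eq_of_card_eq F y (card_fin k), ← hid]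
  rfl

lemma evalOn_empty (F : CF E) (y : Fin k → E) : evalOn F y ∅ = F 0 ![] := by
  rw [evalOn_eq_of_card_eq F y card_empty, Subsingleton.elim (y ∘ _) ![]]

lemma conv_apply_s12 (F G : CF E) (y : Fin k → E) :
    conv F G k y = ∑ p ∈ splits univ, evalOn F y p.1 * evalOn G y p.2 := by
  simp only [sum_splits, powerset_univ, ← compl_eq_univ_sdiff]
  rfl

lemma evalOn_conv (F G : CF E) (y : Fin k → E) (S : Finset (Fin k)) :
    evalOn (conv F G) y S = ∑ p ∈ splits S, evalOn F y p.1 * evalOn G y p.2 := by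
  calc evalOn (conv F G) y S
      = ∑ p ∈ splits univ, evalOn F (y ∘ S.orderEmbOfFin rfl) p.1 *
          evalOn G (y ∘ S.orderEmbOfFin rfl) p.2 := conv_apply_s12 F G _
    _ = ∑ p ∈ splits (univ.map (S.orderEmbOfFin rfl).toEmbedding),
          evalOn F y p.1 * evalOn G y p.2 := by
        simp only [sum_splits_map, evalOn_map]
    _ = ∑ p ∈ splits S, evalOn F y p.1 * evalOn G y p.2 := by rw [map_orderEmbOfFin_univ]

lemma conv_zero (F G : CF E) : conv F G 0 ![] = F 0 ![] * G 0 ![] := by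
  rw [conv_apply_s12, univ_eq_empty, splits_empty, sum_singleton, evalOn_empty, evalOn_empty]

lemma conv_assoc (F G H : CF E) : conv (conv F G) H = conv F (conv G H) := by
  funext k y
  simp only [conv_apply_s12, evalOn_conv, sum_mul, mul_sum, ← mul_assoc]
  exact sum_splits_assoc univ fun I J K => evalOn F y I * evalOn G y J * evalOn H y K

lemma conv_conv_eq_extremes_add_sum_properTriples [NeZero k] (A B C : CF E) (y : Fin k → E) :
    conv (conv A B) C k y =
      A 0 ![] * conv B C k y + A k y * (B 0 ![] * C 0 ![]) +
        ∑ σ ∈ properTriples k, evalOn B y σ.1 * evalOn C y σ.2.1 * evalOn A y σ.2.2 := by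
  have hinner (K : Finset (Fin k)) :
      ∑ p ∈ splits Kᶜ, evalOn B y p.1 * evalOn C y p.2 * evalOn A y K =
        evalOn A y K * evalOn (conv B C) y Kᶜ := by
    rw [evalOn_conv, ← sum_mul, mul_comm]
  simp only [sum_properTriples, hinner]
  rw [conv_assoc, conv_apply_s12, sum_splits, powerset_univ]
  simp only [← compl_eq_univ_sdiff]
  rw [sum_eq_empty_add_univ_add_sum_proper, Fintype.card_fin, compl_empty, compl_univ,
    evalOn_empty, evalOn_empty, evalOn_univ, evalOn_univ, conv_zero]

end EvalOn

section StarExp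

variable {E : Type} {k : ℕ} {F : CF E}

lemma evalOn_unit (y : Fin k → E) (S : Finset (Fin k)) :
    evalOn unit y S = if S = ∅ then 1 else 0 := by
  simp [evalOn, unit]

lemma evalOn_empty_eq_zero (hF : F 0 = 0) (y : Fin k → E) : evalOn F y ∅ = 0 := by
  rw [evalOn_empty, hF, Pi.zero_apply]

lemma evalOn_starPow (hF : F 0 = 0) (y : Fin k → E) (m : ℕ) (S : Finset (Fin k)) :
    evalOn (starPow F m) y S = ∑ π ∈ ordPartsOf m S, ∏ i, evalOn F y (π i) := by
  induction m generalizing S with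
  | zero => rw [sum_ordPartsOf_zero, starPow, evalOn_unit]
  | succ m ih =>
    rw [sum_ordPartsOf_succ (evalOn_empty_eq_zero hF y), starPow, evalOn_conv]
    simp only [ih]

lemma starExp_zero (F : CF E) : starExp F 0 ![] = 1 := by
  simp [starExp, starPow, unit]

lemma evalOn_starExp (hF : F 0 = 0) (y : Fin k → E) {S : Finset (Fin k)} (hS : S.Nonempty) :
    evalOn (starExp F) y S =
      ∑ l ∈ Icc 1 #S, (l.factorial : ℝ)⁻¹ * ∑ π ∈ ordPartsOf l S, ∏ i, evalOn F y (π i) := by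
  have hsum : evalOn (starExp F) y S =
      ∑ l ∈ range (#S + 1), (l.factorial : ℝ)⁻¹ * evalOn (starPow F l) y S := rfl
  rw [hsum, range_eq_Ico, sum_eq_sum_Ico_succ_bot (Nat.succ_pos _), evalOn_starPow hF,
    sum_ordPartsOf_zero, if_neg hS.ne_empty, mul_zero, zero_add]
  simp only [evalOn_starPow hF]
  rfl

lemma starExp_apply [NeZero k] (hF : F 0 = 0) (y : Fin k → E) :
    starExp F k y = F k y +
      ∑ l ∈ Icc 2 k, (l.factorial : ℝ)⁻¹ *
        ∑ π ∈ ordPartsOf l univ, ∏ i, evalOn F y (π i) := by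
  rw [← evalOn_univ (starExp F), evalOn_starExp hF y univ_nonempty, card_fin,
    ← insert_Icc_add_one_left_eq_Icc NeZero.one_le, sum_insert (by simp),
    sum_ordPartsOf_one (evalOn_empty_eq_zero hF y), evalOn_univ]
  simp

lemma starExp_one (hF : F 0 = 0) (x : Fin 1 → E) : starExp F 1 x = F 1 x := by
  simp [starExp_apply hF]

end StarExp

section Derivative

variable {E : Type}

lemma IsSymm.D2_apply {F : CF E} (hF : IsSymm F) (x₁ x₂ : E) {n : ℕ} (y : Fin n → E) :
    D2 x₁ x₂ F n y = F (n + 2) (Fin.cons x₁ (Fin.cons x₂ y)) := by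
  have hswap : (Fin.cons x₁ (Fin.cons x₂ y) : Fin (n + 2) → E) ∘ Equiv.swap 0 1 =
      Fin.cons x₂ (Fin.cons x₁ y) :=
    Matrix.cons_cons_comp_swap_zero_one x₁ x₂ y
  rw [← hF (n + 2) (Equiv.swap 0 1), hswap]
  rfl

lemma evalOn_inv_smul_D (x : E) (c : ℝ) (F : CF E) {k : ℕ} (y : Fin k → E)
    (S : Finset (Fin k)) :
    evalOn (c⁻¹ • D x F) y S = F (#S + 1) (Fin.cons x (sub y S)) / c :=
  (div_eq_inv_mul _ _).symm

lemma inv_smul_D_zero {x : E} {F : CF E} (hx : F 1 ![x] ≠ 0) :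
    ((F 1 ![x])⁻¹ • D x F) 0 ![] = 1 :=
  inv_mul_cancel₀ hx

end Derivative

section Recursion

variable {E : Type} {k : ℕ} {ω B C Φ : CF E} {c : ℝ}

lemma evalOn_starExp_sub_smul_unit (hω : ω 0 = 0) (c : ℝ) (y : Fin k → E) {S : Finset (Fin k)}
    (hS : S.Nonempty) :
    evalOn (starExp ω - c • unit) y S =
      ∑ l ∈ Icc 1 #S, (l.factorial : ℝ)⁻¹ * ∑ π ∈ ordPartsOf l S, ∏ i, evalOn ω y (π i) := by
  have hsub : evalOn (starExp ω - c • unit) y S =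
      evalOn (starExp ω) y S - c * evalOn unit y S := rfl
  rw [hsub, evalOn_unit, if_neg hS.ne_empty, mul_zero, sub_zero, evalOn_starExp hω y hS]

theorem kernel_recursion_of_conv_eq [NeZero k] (hω : ω 0 = 0) (hB : B 0 ![] = 1)
    (hC : C 0 ![] = 1) (hΦ : Φ = conv (conv (starExp ω - c • unit) B) C) (y : Fin k → E) :
    ω k y = Φ k y
      - Φ 0 ![] * ∑ σ ∈ splits univ, evalOn B y σ.1 * evalOn C y σ.2
      - ∑ σ ∈ properTriples k, evalOn B y σ.1 * evalOn C y σ.2.1 *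
          ∑ l ∈ Icc 1 #σ.2.2, (l.factorial : ℝ)⁻¹ *
            ∑ π ∈ ordPartsOf l σ.2.2, ∏ i, evalOn ω y (π i)
      - ∑ l ∈ Icc 2 k, (l.factorial : ℝ)⁻¹ *
          ∑ π ∈ ordPartsOf l univ, ∏ i, evalOn ω y (π i) := by
  set A := starExp ω - c • unit with hA
  have hA0 : Φ 0 ![] = A 0 ![] := by
    rw [hΦ, conv_zero, conv_zero, hB, hC, mul_one, mul_one]
  have hAk : A k y = starExp ω k y := by
    simp [hA, unit, NeZero.ne k]
  have hproper : ∑ σ ∈ properTriples k, evalOn B y σ.1 * evalOn C y σ.2.1 * evalOn A y σ.2.2 =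
      ∑ σ ∈ properTriples k, evalOn B y σ.1 * evalOn C y σ.2.1 *
        ∑ l ∈ Icc 1 #σ.2.2, (l.factorial : ℝ)⁻¹ *
          ∑ π ∈ ordPartsOf l σ.2.2, ∏ i, evalOn ω y (π i) :=
    sum_congr rfl fun σ hσ => by
      rw [evalOn_starExp_sub_smul_unit hω c y (nonempty_of_mem_properTriples hσ)]
  rw [hA0, hΦ, conv_conv_eq_extremes_add_sum_properTriples, hproper, conv_apply_s12, hAk,
    starExp_apply hω, hB, hC]
  ring

end Recursion

end CF

open CF in
/-- Remark 3.2, eq. (3.9): recursion for the two-point kernels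
`ω_{(x₁,x₂)}`. -/
theorem twoPoint_kernel_recursion (E : Type) (ρ ρT ω : CF E) (x₁ x₂ : E)
    (hρ0 : ρ 0 = 1) (hρsymm : IsSymm ρ)
    (hρT0 : ρT 0 = 0) (hρTsymm : IsSymm ρT) (hρTexp : starExp ρT = ρ)
    (h1 : ρ 1 ![x₁] ≠ 0) (h2 : ρ 1 ![x₂] ≠ 0) (h12 : ρ 2 ![x₁, x₂] ≠ 0)
    (hω0 : ω 0 = 0) (hωsymm : IsSymm ω)
    (hω : (ρ 2 ![x₁, x₂])⁻¹ • D2 x₁ x₂ ρT =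
      conv (conv (starExp ω - ((ρ 1 ![x₁] * ρ 1 ![x₂]) / ρ 2 ![x₁, x₂]) • unit)
          ((ρ 1 ![x₁])⁻¹ • D x₁ ρT))
        ((ρ 1 ![x₂])⁻¹ • D x₂ ρT)) :
    ∀ (k : ℕ), 1 ≤ k → ∀ y : Fin k → E,
      ω k y =
        ρT (k + 2) (Fin.cons x₁ (Fin.cons x₂ y)) / ρ 2 ![x₁, x₂]
        - (ρT 2 ![x₁, x₂] / ρ 2 ![x₁, x₂]) *
            ∑ σ ∈ (Finset.univ : Finset (Finset (Fin k) × Finset (Fin k))).filter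
                (fun σ => Disjoint σ.1 σ.2 ∧ σ.1 ∪ σ.2 = Finset.univ),
              (ρT (σ.1.card + 1) (Fin.cons x₁ (sub y σ.1)) / ρ 1 ![x₁]) *
                (ρT (σ.2.card + 1) (Fin.cons x₂ (sub y σ.2)) / ρ 1 ![x₂])
        - ∑ σ ∈ (Finset.univ :
              Finset (Finset (Fin k) × Finset (Fin k) × Finset (Fin k))).filter
              (fun σ => Disjoint σ.1 σ.2.1 ∧ Disjoint σ.1 σ.2.2 ∧
                Disjoint σ.2.1 σ.2.2 ∧ σ.1 ∪ σ.2.1 ∪ σ.2.2 = Finset.univ ∧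
                0 < σ.2.2.card ∧ σ.2.2.card < k),
            (ρT (σ.1.card + 1) (Fin.cons x₁ (sub y σ.1)) / ρ 1 ![x₁]) *
              (ρT (σ.2.1.card + 1) (Fin.cons x₂ (sub y σ.2.1)) / ρ 1 ![x₂]) *
              ∑ l ∈ Finset.Icc 1 σ.2.2.card, ((l.factorial : ℝ))⁻¹ *
                ∑ π ∈ ordPartsOf l σ.2.2, ∏ i : Fin l, ω (π i).card (sub y (π i))
        - ∑ l ∈ Finset.Icc 2 k, ((l.factorial : ℝ))⁻¹ *
            ∑ π ∈ ordPartsOf l (Finset.univ : Finset (Fin k)),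
              ∏ i : Fin l, ω (π i).card (sub y (π i)) := by
  intro k hk y
  have : NeZero k := ⟨Nat.one_le_iff_ne_zero.1 hk⟩
  have hone (x : E) : ρ 1 ![x] = ρT 1 ![x] := by rw [← hρTexp, starExp_one hρT0]
  have hnormalized (x : E) (hx : ρ 1 ![x] ≠ 0) : ((ρ 1 ![x])⁻¹ • D x ρT) 0 ![] = 1 := by
    rw [hone] at hx ⊢
    exact inv_smul_D_zero hx
  have hlhs {n : ℕ} (z : Fin n → E) : ((ρ 2 ![x₁, x₂])⁻¹ • D2 x₁ x₂ ρT) n z =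
      ρT (n + 2) (Fin.cons x₁ (Fin.cons x₂ z)) / ρ 2 ![x₁, x₂] := by
    rw [← hρTsymm.D2_apply, div_eq_inv_mul]
    rfl
  have hrec := kernel_recursion_of_conv_eq hω0 (hnormalized x₁ h1) (hnormalized x₂ h2) hω y
  simp only [hlhs, evalOn_inv_smul_D, splits_univ] at hrec
  exact hrec
end
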